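/- Let $n, m \in \mathbb{N}$ with $m + 1 < n$. Given $a_J, a_1, \dots, a_m \in \mathbb{R}$, $b_J, b_1, \dots, b_m \in \mathbb{R}^n$ and $c_J, c_1, \dots, c_m \in \mathbb{R}$, consider the S-QCQP problem: minimize $J(x) = a_J\|x\|^2 + 2 b_J^T x + c_J$ over $x \in \mathbb{R}^n$ subject to $f_k(x) = a_k\|x\|^2 + 2 b_k^T x + c_k \le 0$ for $k = 1, \dots, m$, where $\|\cdot\|$ is the Euclidean norm. Assume there exists $\gamma' \in \mathbb{R}^m$ with $\gamma'_k \ge 0$ for all $k$, $\gamma' \ne 0$, such that $a_J + \sum_{k=1}^m \gamma'_k a_k \ge 0$; let $x^*$ be a global minimizer of the S-QCQP; and assume there exists $x_0 \in \mathbb{R}^n$ with $f_k(x_0) < 0$ for all $k = 1, \dots, m$. Then: (1) The Shor SDP relaxation of the S-QCQP is exact: the infimum over pairs $(x, X) \in \mathbb{R}^n \times \mathrm{Sym}(n)$, where $\mathrm{Sym}(n)$ is the set of symmetric real $n \times n$ matrices, of $a_J \operatorname{Tr}(X) + 2 b_J^T x + c_J$ subject to $a_k \operatorname{Tr}(X)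 + 2 b_k^T x + c_k \le 0$ for $k = 1, \dots, m$ and $X - x x^T$ positive semidefinite, equals $J(x^*)$, and it is attained at $(x^*, x^* (x^*)^T)$. (2) The diagonal convex relaxation of the S-QCQP is exact: the infimum over pairs $(x, y) \in \mathbb{R}^n \times \mathbb{R}^n$ of $a_J \sum_{i=1}^n y_i + 2 b_J^T x + c_J$ subject to $a_k \sum_{i=1}^n y_i + 2 b_k^T x + c_k \le 0$ for $k = 1, \dots, m$ and $x_i^2 - y_i \le 0$ for $i = 1, \dots, n$, equals $J(x^*)$, and it is attained at $(x^*, y^*)$ with $y^*_i = (x^*_i)^2$ for all $i$. -/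

import Mathlib

open Matrix

/-- Data of an S-QCQP in `ℝⁿ` with `m` constraints: minimize
`aJ xᵀx + 2 bJᵀx + cJ` subject to `a k xᵀx + 2 (b k)ᵀx + c k ≤ 0` for all `k`. -/
structure SQCQP (n m : ℕ) where
  aJ : ℝ
  bJ : Fin n → ℝ
  cJ : ℝ
  a : Fin m → ℝ
  b : Fin m → Fin n → ℝ
  c : Fin m → ℝ

namespace SQCQP

variable {n m : ℕ}

/-- The objective `J(x) = aJ ‖x‖² + 2 bJᵀx + cJ`, where `‖x‖² = xᵀx`. -/
def J (P : SQCQP n m) (x : Fin n → ℝ) : ℝ :=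
  P.aJ * (x ⬝ᵥ x) + 2 * (P.bJ ⬝ᵥ x) + P.cJ

/-- The constraint functions `f k x = a k ‖x‖² + 2 (b k)ᵀx + c k`. -/
def f (P : SQCQP n m) (k : Fin m) (x : Fin n → ℝ) : ℝ :=
  P.a k * (x ⬝ᵥ x) + 2 * (P.b k ⬝ᵥ x) + P.c k

def Feasible (P : SQCQP n m) (x : Fin n → ℝ) : Prop :=
  ∀ k, P.f k x ≤ 0

def IsGlobalMinimizer (P : SQCQP n m) (x : Fin n → ℝ) : Prop :=
  P.Feasible x ∧ ∀ z, P.Feasible z → P.J x ≤ P.J z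

/-- Objective of the Shor SDP relaxation, with the constant term of `J` kept. -/
def shorObj (P : SQCQP n m) (x : Fin n → ℝ) (X : Matrix (Fin n) (Fin n) ℝ) : ℝ :=
  P.aJ * X.trace + 2 * (P.bJ ⬝ᵥ x) + P.cJ

/-- Feasibility for the Shor SDP relaxation; `vecMulVec x x` is `x xᵀ`. -/
def ShorFeasible (P : SQCQP n m) (x : Fin n → ℝ) (X : Matrix (Fin n) (Fin n) ℝ) : Prop :=
  X.IsSymm ∧ (∀ k, P.a k * X.trace + 2 * (P.b k ⬝ᵥ x) + P.c k ≤ 0) ∧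
    (X - vecMulVec x x).PosSemidef

def IsShorMinimizer (P : SQCQP n m) (x : Fin n → ℝ) (X : Matrix (Fin n) (Fin n) ℝ) : Prop :=
  P.ShorFeasible x X ∧ ∀ z Z, P.ShorFeasible z Z → P.shorObj x X ≤ P.shorObj z Z

/-- The set of objective values of the Shor SDP relaxation on its feasible pairs. -/
def shorValues (P : SQCQP n m) : Set ℝ :=
  {t | ∃ x X, P.ShorFeasible x X ∧ t = P.shorObj x X}

/-- Objective of the diagonal relaxation in the variables `x, y ∈ ℝⁿ`, in which
`y i` replaces `x i ^ 2`; the constant term of `J` is kept. -/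
def diagObj (P : SQCQP n m) (x y : Fin n → ℝ) : ℝ :=
  P.aJ * (∑ i, y i) + 2 * (P.bJ ⬝ᵥ x) + P.cJ

/-- Feasibility for the diagonal relaxation. -/
def DiagFeasible (P : SQCQP n m) (x y : Fin n → ℝ) : Prop :=
  (∀ k, P.a k * (∑ i, y i) + 2 * (P.b k ⬝ᵥ x) + P.c k ≤ 0) ∧ ∀ i, x i ^ 2 - y i ≤ 0

def IsDiagMinimizer (P : SQCQP n m) (x y : Fin n → ℝ) : Prop :=
  P.DiagFeasible x y ∧ ∀ z w, P.DiagFeasible z w → P.diagObj x y ≤ P.diagObj z w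

/-- The set of objective values of the diagonal relaxation on its feasible pairs. -/
def diagValues (P : SQCQP n m) : Set ℝ :=
  {t | ∃ x y, P.DiagFeasible x y ∧ t = P.diagObj x y}

end SQCQP

/-- Fewer than `n` linear functionals on `ℝⁿ` have a common nonzero zero. -/
theorem exists_ne_zero_forall_dotProduct_eq_zero {n p : ℕ} (hpn : p < n)
    (v : Fin p → Fin n → ℝ) : ∃ d : Fin n → ℝ, d ≠ 0 ∧ ∀ i, v i ⬝ᵥ d = 0 := by
  have hker : LinearMap.ker (Matrix.mulVecLin (Matrix.of v)) ≠ ⊥ :=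
    LinearMap.ker_ne_bot_of_finrank_lt (by simpa using hpn)
  obtain ⟨d, hd, hd0⟩ := Submodule.exists_mem_ne_zero_of_ne_bot hker
  exact ⟨d, hd0, fun i => congrFun (LinearMap.mem_ker.mp hd) i⟩

/-- Moving along a nonzero direction, the squared norm attains every larger value. -/
theorem exists_dotProduct_self_add_smul_eq {n : ℕ} {z d : Fin n → ℝ} (hd : d ≠ 0) {t : ℝ}
    (ht : z ⬝ᵥ z ≤ t) : ∃ s : ℝ, (z + s • d) ⬝ᵥ (z + s • d) = t := by
  have hdd : d ⬝ᵥ d ≠ 0 := fun h => hd (dotProduct_self_eq_zero.mp h)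
  have hdd0 : 0 ≤ d ⬝ᵥ d := Finset.sum_nonneg fun i _ => mul_self_nonneg (d i)
  have hdiscr : 0 ≤ discrim (d ⬝ᵥ d) (2 * (z ⬝ᵥ d)) (z ⬝ᵥ z - t) := by
    rw [discrim]
    nlinarith [sq_nonneg (2 * (z ⬝ᵥ d)), mul_nonneg hdd0 (sub_nonneg.mpr ht)]
  obtain ⟨s, hs⟩ := exists_quadratic_eq_zero hdd ⟨_, (Real.mul_self_sqrt hdiscr).symm⟩
  refine ⟨s, ?_⟩
  simp only [add_dotProduct, dotProduct_add, smul_dotProduct, dotProduct_smul, smul_eq_mul,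
    dotProduct_comm d z]
  linarith

namespace SQCQP

variable {n m : ℕ}

/-- If `m + 1 < n`, relaxing `‖x‖²` to a scalar `t ≥ ‖x‖²` yields no new values of the objective
and of the constraints. -/
theorem exists_eq_of_dotProduct_self_le (hmn : m + 1 < n) (P : SQCQP n m) {z : Fin n → ℝ} {t : ℝ}
    (ht : z ⬝ᵥ z ≤ t) :
    ∃ x, P.J x = P.aJ * t + 2 * (P.bJ ⬝ᵥ z) + P.cJ ∧
      ∀ k, P.f k x = P.a k * t + 2 * (P.b k ⬝ᵥ z) + P.c k := by
  obtain ⟨d, hd0, hd⟩ := exists_ne_zero_forall_dotProduct_eq_zero hmn (Fin.cons P.bJ P.b)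
  have hJ : P.bJ ⬝ᵥ d = 0 := hd 0
  have hf : ∀ k, P.b k ⬝ᵥ d = 0 := fun k => hd k.succ
  obtain ⟨s, hs⟩ := exists_dotProduct_self_add_smul_eq hd0 ht
  exact ⟨z + s • d, by simp [J, hs, hJ], fun k => by simp [f, hs, hf k]⟩

theorem IsGlobalMinimizer.le_of_dotProduct_self_le (hmn : m + 1 < n) {P : SQCQP n m}
    {xstar : Fin n → ℝ} (hmin : P.IsGlobalMinimizer xstar) {z : Fin n → ℝ} {t : ℝ}
    (ht : z ⬝ᵥ z ≤ t) (hz : ∀ k, P.a k * t + 2 * (P.b k ⬝ᵥ z) + P.c k ≤ 0) :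
    P.J xstar ≤ P.aJ * t + 2 * (P.bJ ⬝ᵥ z) + P.cJ := by
  obtain ⟨x, hJ, hf⟩ := P.exists_eq_of_dotProduct_self_le hmn ht
  exact hJ ▸ hmin.2 x fun k => (hf k).trans_le (hz k)

theorem shorObj_vecMulVec_self (P : SQCQP n m) (x : Fin n → ℝ) :
    P.shorObj x (vecMulVec x x) = P.J x := by
  simp [shorObj, J, trace_vecMulVec]

theorem Feasible.shorFeasible {P : SQCQP n m} {x : Fin n → ℝ} (hx : P.Feasible x) :
    P.ShorFeasible x (vecMulVec x x) := by
  refine ⟨transpose_vecMulVec x x, fun k => ?_, ?_⟩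
  · simpa [f, trace_vecMulVec] using hx k
  · simpa using PosSemidef.zero

theorem ShorFeasible.dotProduct_self_le_trace {P : SQCQP n m} {x : Fin n → ℝ}
    {X : Matrix (Fin n) (Fin n) ℝ} (h : P.ShorFeasible x X) : x ⬝ᵥ x ≤ X.trace := by
  have := h.2.2.trace_nonneg
  rwa [trace_sub, trace_vecMulVec, sub_nonneg] at this

theorem IsGlobalMinimizer.isShorMinimizer (hmn : m + 1 < n) {P : SQCQP n m}
    {xstar : Fin n → ℝ} (hmin : P.IsGlobalMinimizer xstar) :
    P.IsShorMinimizer xstar (vecMulVec xstar xstar) :=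
  ⟨hmin.1.shorFeasible, fun _ _ hZ => (P.shorObj_vecMulVec_self xstar).trans_le <|
    hmin.le_of_dotProduct_self_le hmn hZ.dotProduct_self_le_trace hZ.2.1⟩

theorem IsShorMinimizer.isLeast {P : SQCQP n m} {x : Fin n → ℝ} {X : Matrix (Fin n) (Fin n) ℝ}
    (h : P.IsShorMinimizer x X) : IsLeast P.shorValues (P.shorObj x X) := by
  refine ⟨⟨x, X, h.1, rfl⟩, ?_⟩
  rintro _ ⟨z, Z, hZ, rfl⟩
  exact h.2 z Z hZ

theorem sum_sq_eq_dotProduct_self (x : Fin n → ℝ) : ∑ i, x i ^ 2 = x ⬝ᵥ x := by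
  simp [dotProduct, sq]

theorem diagObj_sq (P : SQCQP n m) (x : Fin n → ℝ) : P.diagObj x (fun i => x i ^ 2) = P.J x := by
  simp [diagObj, J, sum_sq_eq_dotProduct_self]

theorem Feasible.diagFeasible {P : SQCQP n m} {x : Fin n → ℝ} (hx : P.Feasible x) :
    P.DiagFeasible x (fun i => x i ^ 2) :=
  ⟨fun k => by simpa [f, sum_sq_eq_dotProduct_self] using hx k, fun i => (sub_self _).le⟩

theorem DiagFeasible.dotProduct_self_le_sum {P : SQCQP n m} {x y : Fin n → ℝ}
    (h : P.DiagFeasible x y) : x ⬝ᵥ x ≤ ∑ i, y i :=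
  sum_sq_eq_dotProduct_self x ▸ Finset.sum_le_sum fun i _ => sub_nonpos.mp (h.2 i)

theorem IsGlobalMinimizer.isDiagMinimizer (hmn : m + 1 < n) {P : SQCQP n m}
    {xstar : Fin n → ℝ} (hmin : P.IsGlobalMinimizer xstar) :
    P.IsDiagMinimizer xstar (fun i => xstar i ^ 2) :=
  ⟨hmin.1.diagFeasible, fun _ _ hw => (P.diagObj_sq xstar).trans_le <|
    hmin.le_of_dotProduct_self_le hmn hw.dotProduct_self_le_sum hw.1⟩

theorem IsDiagMinimizer.isLeast {P : SQCQP n m} {x y : Fin n → ℝ}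
    (h : P.IsDiagMinimizer x y) : IsLeast P.diagValues (P.diagObj x y) := by
  refine ⟨⟨x, y, h.1, rfl⟩, ?_⟩
  rintro _ ⟨z, w, hw, rfl⟩
  exact h.2 z w hw

end SQCQP

theorem stmt_9 (n m : ℕ) (hmn : m + 1 < n) (P : SQCQP n m)
    (hγ : ∃ γ : Fin m → ℝ, (∀ k, 0 ≤ γ k) ∧ γ ≠ 0 ∧ 0 ≤ P.aJ + ∑ k, γ k * P.a k)
    (xstar : Fin n → ℝ) (hmin : P.IsGlobalMinimizer xstar)
    (hslater : ∃ x₀ : Fin n → ℝ, ∀ k, P.f k x₀ < 0) :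
    (IsGLB P.shorValues (P.J xstar) ∧ sInf P.shorValues = P.J xstar ∧
      P.IsShorMinimizer xstar (vecMulVec xstar xstar)) ∧
    (IsGLB P.diagValues (P.J xstar) ∧ sInf P.diagValues = P.J xstar ∧
      P.IsDiagMinimizer xstar (fun i => xstar i ^ 2)) := by
  have hS := hmin.isShorMinimizer hmn
  have hD := hmin.isDiagMinimizer hmn
  have hSL := hS.isLeast
  have hDL := hD.isLeast
  rw [P.shorObj_vecMulVec_self] at hSL
  rw [P.diagObj_sq] at hDL
  exact ⟨⟨hSL.isGLB, hSL.csInf_eq, hS⟩, ⟨hDL.isGLB, hDL.csInf_eq, hD⟩⟩
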